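/- Let N ≥ 2 and let m : 𝕋 → ℂ be measurable with (1/N) ∑_{w : w^N = z} |m(w)|² = 1 for almost every z, so that S_m on L²(𝕋), (S_m ξ)(z) = m(z) ξ(z^N), is an isometry. Assume that the subspace ⋂_{k≥1} S_m^k(L²(𝕋)) is nonzero, and pick ξ in this subspace with ‖ξ‖_2 = 1. Then |ξ(z)|² = lim_{k→∞} ∏_{n=0}^{k} |m(z^{N^n})|² for almost every z ∈ 𝕋, and moreover |ξ(z)| = 1 = |m(z)| for almost every z ∈ 𝕋. -/

import Mathlib

open MeasureTheory Real Filter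

noncomputable section

instance : Fact (0 < 2 * Real.pi) := ⟨by positivity⟩

/-- The circle `𝕋 = ℝ/2πℤ`, written additively; `N • z` corresponds to `z ↦ z^N`. -/
abbrev Circle2π : Type := AddCircle (2 * Real.pi)

/-- Normalized Haar (probability) measure on the circle. -/
abbrev haarT : Measure Circle2π := AddCircle.haarAddCircle

/-!
Let `T z = N • z`. On the moduli `f = |ξ|²` the operator `S_m` acts as `L f = |m|² · (f ∘ T)`,
which is isometric on `L¹` and preserves the integral. If `f = Lᵏ g`, then `g ∘ Tᵏ` is the
conditional expectation of `f` on the σ-algebra pulled back along `Tᵏ`, so that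
`‖f - Lᵏ c‖₁ = ‖g - c‖₁ = ‖E[f | T⁻ᵏ] - c‖₁` with `c = ∫ f`. For `f ∈ ⋂ₖ Lᵏ(L¹)` this tends
to `0`, because `T` is exact: `E[z ^ n | T⁻ᵏ] = 0` unless `N ^ k ∣ n`. Hence such an `f` is
determined by its mean, so `L f = f`, so `‖f - c‖₁ = ‖Lᵏ (f - c)‖₁ = ‖f - Lᵏ c‖₁ → 0` and `f`
is constant. Applying this to both `ξ` and `S_m ξ` gives `|ξ| = 1` and `|m| · |ξ ∘ T| = 1`.
-/

open scoped ENNReal NNReal Topology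

section WeightedComposition

variable {X E : Type*} {mX : MeasurableSpace X} {μ : Measure X} {T : X → X} {w : X → ℝ≥0}
  [NormedAddCommGroup E] [NormedSpace ℝ E] {f g : X → E}

/-- The weighted composition operator `f ↦ w · (f ∘ T)`, acting on functions rather than on
classes modulo null sets. For `w = |m|²` it is the operator that `S_m` induces on the moduli
`|ξ|²`. -/
def weightedComp (T : X → X) (w : X → ℝ≥0) (f : X → E) : X → E := fun x => w x • f (T x)

lemma weightedComp_iterate_apply (k : ℕ) (f : X → E) (x : X) :
    (weightedComp T w)^[k] f x = (∏ n ∈ Finset.range k, w (T^[n] x)) • f (T^[k] x) := by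
  induction k generalizing x with
  | zero => simp
  | succ k ih =>
    rw [Function.iterate_succ_apply', weightedComp, ih, Finset.prod_range_succ', smul_smul,
      mul_comm]
    simp only [Function.iterate_succ_apply, Function.iterate_zero, id_eq]

lemma weightedComp_iterate_sub (k : ℕ) (f g : X → E) :
    (weightedComp T w)^[k] (f - g) = (weightedComp T w)^[k] f - (weightedComp T w)^[k] g := by
  ext x
  simp only [weightedComp_iterate_apply, Pi.sub_apply, smul_sub]

lemma weightedComp_iterate_indicator (k : ℕ) (s : Set X) (f : X → E) :
    (weightedComp T w)^[k] (s.indicator f) =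
      (T^[k] ⁻¹' s).indicator ((weightedComp T w)^[k] f) := by
  ext x
  by_cases hx : T^[k] x ∈ s <;> simp [weightedComp_iterate_apply, hx]

/-- The unitary part `⋂ₖ Lᵏ(L¹(μ))` of the operator `L = weightedComp T w`, as a predicate on
functions. -/
def MemUnitaryPart (T : X → X) (w : X → ℝ≥0) (μ : Measure X) (f : X → E) : Prop :=
  ∀ k : ℕ, ∃ g : X → E, Integrable g μ ∧ f =ᵐ[μ] (weightedComp T w)^[k] g

lemma MemUnitaryPart.integrable (hf : MemUnitaryPart T w μ f) : Integrable f μ := by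
  obtain ⟨g, hg, hfg⟩ := hf 0
  exact hg.congr hfg.symm

section Isometry

variable (hw : Measurable w) (hTw : MeasurePreserving T (μ.withDensity fun x => w x) μ)

include hw hTw

lemma weightedComp_congr_ae (hfg : f =ᵐ[μ] g) : weightedComp T w f =ᵐ[μ] weightedComp T w g := by
  have hcomp := hTw.quasiMeasurePreserving.ae hfg
  rw [ae_withDensity_iff hw.coe_nnreal_ennreal] at hcomp
  filter_upwards [hcomp] with x hx
  by_cases hwx : w x = 0
  · simp only [weightedComp, hwx, zero_smul]
  · simp only [weightedComp, hx (by exact_mod_cast hwx)]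

lemma weightedComp_iterate_congr_ae (k : ℕ) (hfg : f =ᵐ[μ] g) :
    (weightedComp T w)^[k] f =ᵐ[μ] (weightedComp T w)^[k] g := by
  induction k with
  | zero => exact hfg
  | succ k ih =>
    simp only [Function.iterate_succ_apply']
    exact weightedComp_congr_ae hw hTw ih

lemma integrable_weightedComp (hf : Integrable f μ) : Integrable (weightedComp T w f) μ :=
  (integrable_withDensity_iff_integrable_smul hw).mp (hTw.integrable_comp_of_integrable hf)

lemma integrable_weightedComp_iterate (k : ℕ) (hf : Integrable f μ) :
    Integrable ((weightedComp T w)^[k] f) μ := by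
  induction k with
  | zero => exact hf
  | succ k ih =>
    rw [Function.iterate_succ_apply']
    exact integrable_weightedComp hw hTw ih

lemma MemUnitaryPart.weightedComp_iterate (hf : MemUnitaryPart T w μ f) (j : ℕ) :
    MemUnitaryPart T w μ ((weightedComp T w)^[j] f) := by
  intro k
  obtain ⟨g, hg, hfg⟩ := hf k
  refine ⟨(weightedComp T w)^[j] g, integrable_weightedComp_iterate hw hTw j hg, ?_⟩
  rw [(Function.Commute.refl _).iterate_iterate k j g]
  exact weightedComp_iterate_congr_ae hw hTw j hfg

lemma integral_weightedComp (hf : AEStronglyMeasurable f μ) :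
    ∫ x, weightedComp T w f x ∂μ = ∫ x, f x ∂μ := by
  simp only [weightedComp]
  rw [← integral_withDensity_eq_integral_smul hw (fun x => f (T x)),
    ← integral_map hTw.aemeasurable (by rwa [hTw.map_eq]), hTw.map_eq]

lemma integral_weightedComp_iterate (k : ℕ) (hf : Integrable f μ) :
    ∫ x, (weightedComp T w)^[k] f x ∂μ = ∫ x, f x ∂μ := by
  induction k with
  | zero => rfl
  | succ k ih =>
    rw [Function.iterate_succ_apply', integral_weightedComp hw hTw
      (integrable_weightedComp_iterate hw hTw k hf).aestronglyMeasurable, ih]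

lemma eLpNorm_one_weightedComp (hf : AEStronglyMeasurable f μ) :
    eLpNorm (weightedComp T w f) 1 μ = eLpNorm f 1 μ := by
  rw [← eLpNorm_comp_measurePreserving hf hTw, eLpNorm_one_eq_lintegral_enorm,
    eLpNorm_one_eq_lintegral_enorm,
    lintegral_withDensity_eq_lintegral_mul_non_measurable _ hw.coe_nnreal_ennreal
      (ae_of_all _ fun _ => ENNReal.coe_lt_top)]
  refine lintegral_congr fun x => ?_
  simp only [weightedComp, NNReal.smul_def, enorm_smul, Pi.mul_apply, Function.comp_apply,
    NNReal.enorm_eq]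

lemma eLpNorm_one_weightedComp_iterate (k : ℕ) (hf : Integrable f μ) :
    eLpNorm ((weightedComp T w)^[k] f) 1 μ = eLpNorm f 1 μ := by
  induction k with
  | zero => rfl
  | succ k ih =>
    rw [Function.iterate_succ_apply', eLpNorm_one_weightedComp hw hTw
      (integrable_weightedComp_iterate hw hTw k hf).aestronglyMeasurable, ih]

lemma condExp_weightedComp_iterate [CompleteSpace E] [IsFiniteMeasure μ]
    (hT : MeasurePreserving T μ μ) (k : ℕ) (hg : Integrable g μ) :
    μ[(weightedComp T w)^[k] g | mX.comap T^[k]] =ᵐ[μ] g ∘ T^[k] := by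
  have hTk := hT.iterate k
  have hgT : Integrable (g ∘ T^[k]) μ := hTk.integrable_comp_of_integrable hg
  refine (ae_eq_condExp_of_forall_setIntegral_eq hTk.measurable.comap_le
    (integrable_weightedComp_iterate hw hTw k hg) (fun _ _ _ => hgT.integrableOn) ?_ ?_).symm
  · rintro _ ⟨s, hs, rfl⟩ -
    calc ∫ x in T^[k] ⁻¹' s, (g ∘ T^[k]) x ∂μ
      _ = ∫ x in s, g x ∂μ := by
        rw [← hTk.map_eq] at hg
        conv_rhs => rw [← hTk.map_eq]
        exact (setIntegral_map hs hg.aestronglyMeasurable hTk.aemeasurable).symm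
      _ = ∫ x, (weightedComp T w)^[k] (s.indicator g) x ∂μ := by
        rw [integral_weightedComp_iterate hw hTw k (hg.indicator hs), integral_indicator hs]
      _ = ∫ x in T^[k] ⁻¹' s, (weightedComp T w)^[k] g x ∂μ := by
        rw [weightedComp_iterate_indicator, integral_indicator (hTk.measurable hs)]
  · rw [← hTk.map_eq] at hg
    exact hg.aestronglyMeasurable.comp_ae_measurable' hTk.aemeasurable

end Isometry
end WeightedComposition

section Exactness

/-- An exact endomorphism of a probability space. Instead of Rokhlin's triviality of
`⋂ₖ T⁻ᵏ(mX)`, the definition records the equivalent `L¹`-convergence of the conditional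
expectations along the decreasing σ-algebras `T⁻ᵏ(mX)` to the mean. -/
structure IsExactEndomorphism {X : Type*} [mX : MeasurableSpace X] (T : X → X) (μ : Measure X) :
    Prop extends MeasurePreserving T μ μ where
  tendsto_condExp : ∀ f : X → ℝ, Integrable f μ →
    Tendsto (fun k => eLpNorm (μ[f | mX.comap T^[k]] - fun _ => ∫ x, f x ∂μ) 1 μ) atTop (𝓝 0)

variable {X : Type*} {mX : MeasurableSpace X} {μ : Measure X} {T : X → X} {w : X → ℝ≥0}
  {f g : X → ℝ}

namespace MemUnitaryPart

variable (hw : Measurable w) (hTw : MeasurePreserving T (μ.withDensity fun x => w x) μ)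
  [IsProbabilityMeasure μ] (hT : IsExactEndomorphism T μ)

include hw hTw hT

lemma tendsto_eLpNorm_sub_iterate_integral (hf : MemUnitaryPart T w μ f) :
    Tendsto (fun k => eLpNorm (f - (weightedComp T w)^[k] fun _ => ∫ x, f x ∂μ) 1 μ)
      atTop (𝓝 0) := by
  refine (hT.tendsto_condExp f hf.integrable).congr fun k => ?_
  obtain ⟨g, hg, hfg⟩ := hf k
  set c : ℝ := ∫ x, f x ∂μ
  have hTk := hT.toMeasurePreserving.iterate k
  have hcondExp : μ[f | mX.comap T^[k]] =ᵐ[μ] g ∘ T^[k] :=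
    (condExp_congr_ae hfg).trans (condExp_weightedComp_iterate hw hTw hT.toMeasurePreserving k hg)
  have hgc : Integrable (g - fun _ => c) μ := hg.sub (integrable_const c)
  calc eLpNorm (μ[f | mX.comap T^[k]] - fun _ => c) 1 μ
    _ = eLpNorm ((g - fun _ => c) ∘ T^[k]) 1 μ :=
      eLpNorm_congr_ae (hcondExp.sub (ae_eq_refl fun _ => c))
    _ = eLpNorm ((weightedComp T w)^[k] (g - fun _ => c)) 1 μ := by
      rw [eLpNorm_comp_measurePreserving hgc.aestronglyMeasurable hTk,
        eLpNorm_one_weightedComp_iterate hw hTw k hgc]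
    _ = eLpNorm (f - (weightedComp T w)^[k] fun _ => c) 1 μ := by
      rw [weightedComp_iterate_sub]
      exact eLpNorm_congr_ae (hfg.symm.sub (ae_eq_refl _))

lemma ae_eq_of_integral_eq (hf : MemUnitaryPart T w μ f) (hg : MemUnitaryPart T w μ g)
    (hfg : ∫ x, f x ∂μ = ∫ x, g x ∂μ) : f =ᵐ[μ] g := by
  have hf_lim := hf.tendsto_eLpNorm_sub_iterate_integral hw hTw hT
  have hg_lim := hg.tendsto_eLpNorm_sub_iterate_integral hw hTw hT
  rw [hfg] at hf_lim
  have hc (k : ℕ) : Integrable ((weightedComp T w)^[k] fun _ => ∫ x, g x ∂μ) μ :=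
    integrable_weightedComp_iterate hw hTw k (integrable_const _)
  have hle (k : ℕ) : eLpNorm (f - g) 1 μ ≤
      eLpNorm (f - (weightedComp T w)^[k] fun _ => ∫ x, g x ∂μ) 1 μ +
        eLpNorm (g - (weightedComp T w)^[k] fun _ => ∫ x, g x ∂μ) 1 μ := by
    rw [← sub_sub_sub_cancel_right f g ((weightedComp T w)^[k] fun _ => ∫ x, g x ∂μ)]
    exact eLpNorm_sub_le (hf.integrable.sub (hc k)).aestronglyMeasurable
      (hg.integrable.sub (hc k)).aestronglyMeasurable le_rfl
  have hzero : eLpNorm (f - g) 1 μ = 0 := by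
    simpa using ge_of_tendsto' (hf_lim.add hg_lim) hle
  rw [eLpNorm_eq_zero_iff (hf.integrable.sub hg.integrable).aestronglyMeasurable one_ne_zero]
    at hzero
  exact (sub_ae_eq_zero _ _).mp hzero

theorem ae_eq_integral (hf : MemUnitaryPart T w μ f) : f =ᵐ[μ] fun _ => ∫ x, f x ∂μ := by
  set c : ℝ := ∫ x, f x ∂μ
  have hfc : Integrable (f - fun _ => c) μ := hf.integrable.sub (integrable_const c)
  have hfix (k : ℕ) : (weightedComp T w)^[k] f =ᵐ[μ] f :=
    (hf.weightedComp_iterate hw hTw k).ae_eq_of_integral_eq hw hTw hT hf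
      (integral_weightedComp_iterate hw hTw k hf.integrable)
  have hconst (k : ℕ) : eLpNorm (f - (weightedComp T w)^[k] fun _ => c) 1 μ =
      eLpNorm (f - fun _ => c) 1 μ := by
    rw [← eLpNorm_one_weightedComp_iterate hw hTw k hfc, weightedComp_iterate_sub]
    exact eLpNorm_congr_ae ((hfix k).symm.sub (ae_eq_refl _))
  have hzero : eLpNorm (f - fun _ => c) 1 μ = 0 :=
    tendsto_const_nhds_iff.mp <|
      (hf.tendsto_eLpNorm_sub_iterate_integral hw hTw hT).congr hconst
  rw [eLpNorm_eq_zero_iff hfc.aestronglyMeasurable one_ne_zero] at hzero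
  exact (sub_ae_eq_zero _ _).mp hzero

end MemUnitaryPart
end Exactness

section WeightedCompositionL2

variable {X 𝕜 : Type*} {mX : MeasurableSpace X} {μ : Measure X} {T : X → X} [RCLike 𝕜]
  {m : X → 𝕜}

lemma integral_norm_sq_eq_norm_sq (ξ : Lp 𝕜 2 μ) : ∫ x, ‖ξ x‖ ^ 2 ∂μ = ‖ξ‖ ^ 2 := by
  have hinner := L2.inner_def (𝕜 := 𝕜) ξ ξ
  simp only [inner_self_eq_norm_sq_to_K] at hinner
  norm_cast at hinner
  exact hinner.symm

lemma integrable_norm_sq (ξ : Lp 𝕜 2 μ) : Integrable (fun x => ‖ξ x‖ ^ 2) μ :=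
  (memLp_two_iff_integrable_sq_norm (Lp.aestronglyMeasurable ξ)).mp (Lp.memLp ξ)

variable {S : Lp 𝕜 2 μ →L[𝕜] Lp 𝕜 2 μ}
  (hS : ∀ ζ : Lp 𝕜 2 μ, ⇑(S ζ) =ᵐ[μ] fun x => m x * ζ (T x))

include hS

lemma norm_sq_apply_ae_eq (ζ : Lp 𝕜 2 μ) :
    (fun x => ‖S ζ x‖ ^ 2) =ᵐ[μ] weightedComp T (fun x => ‖m x‖₊ ^ 2) fun x => ‖ζ x‖ ^ 2 := by
  filter_upwards [hS ζ] with x hx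
  rw [hx, norm_mul, mul_pow]
  simp only [weightedComp, NNReal.smul_def, NNReal.coe_pow, coe_nnnorm, smul_eq_mul]

variable (hm : Measurable m)
  (hTm : MeasurePreserving T (μ.withDensity fun x => (‖m x‖₊ ^ 2 : ℝ≥0)) μ)

include hm hTm

lemma norm_sq_pow_apply_ae_eq (k : ℕ) (ζ : Lp 𝕜 2 μ) :
    (fun x => ‖(S ^ k) ζ x‖ ^ 2) =ᵐ[μ]
      (weightedComp T fun x => ‖m x‖₊ ^ 2)^[k] fun x => ‖ζ x‖ ^ 2 := by
  induction k with
  | zero => rfl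
  | succ k ih =>
    rw [Function.iterate_succ_apply', pow_succ']
    exact (norm_sq_apply_ae_eq hS ((S ^ k) ζ)).trans
      (weightedComp_congr_ae (hm.nnnorm.pow_const 2) hTm ih)

lemma norm_apply_eq_norm (ζ : Lp 𝕜 2 μ) : ‖S ζ‖ = ‖ζ‖ := by
  rw [← sq_eq_sq₀ (norm_nonneg _) (norm_nonneg _), ← integral_norm_sq_eq_norm_sq,
    ← integral_norm_sq_eq_norm_sq, integral_congr_ae (norm_sq_apply_ae_eq hS ζ),
    integral_weightedComp (hm.nnnorm.pow_const 2) hTm (integrable_norm_sq ζ).aestronglyMeasurable]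

lemma memUnitaryPart_norm_sq {ξ : Lp 𝕜 2 μ} (hξ : ξ ∈ ⋂ k : ℕ, Set.range ⇑(S ^ (k + 1))) :
    MemUnitaryPart T (fun x => ‖m x‖₊ ^ 2) μ fun x => ‖ξ x‖ ^ 2 := by
  intro k
  obtain ⟨η, rfl⟩ := Set.mem_iInter.mp hξ k
  rw [pow_succ]
  exact ⟨fun x => ‖S η x‖ ^ 2, integrable_norm_sq (S η),
    norm_sq_pow_apply_ae_eq hS hm hTm k (S η)⟩

lemma ae_norm_eq_one_of_mem_unitaryPart [IsProbabilityMeasure μ] (hT : IsExactEndomorphism T μ)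
    {ξ : Lp 𝕜 2 μ} (hξ : ξ ∈ ⋂ k : ℕ, Set.range ⇑(S ^ (k + 1))) (hξ_norm : ‖ξ‖ = 1) :
    ∀ᵐ x ∂μ, ‖ξ x‖ = 1 := by
  filter_upwards [(memUnitaryPart_norm_sq hS hm hTm hξ).ae_eq_integral
    (hm.nnnorm.pow_const 2) hTm hT] with x hx
  rwa [integral_norm_sq_eq_norm_sq, hξ_norm, one_pow,
    pow_eq_one_iff_of_nonneg (norm_nonneg _) two_ne_zero] at hx

end WeightedCompositionL2

theorem unit_vector_in_unitary_part_of_weighted_composition_general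
    {X 𝕜 : Type*} {mX : MeasurableSpace X} {μ : Measure X} [IsProbabilityMeasure μ] [RCLike 𝕜]
    {T : X → X} (hT : IsExactEndomorphism T μ) {m : X → 𝕜} (hm : Measurable m)
    (hTm : MeasurePreserving T (μ.withDensity fun x => (‖m x‖₊ ^ 2 : ℝ≥0)) μ)
    {S : Lp 𝕜 2 μ →L[𝕜] Lp 𝕜 2 μ} (hS : ∀ ζ : Lp 𝕜 2 μ, ⇑(S ζ) =ᵐ[μ] fun x => m x * ζ (T x))
    {ξ : Lp 𝕜 2 μ} (hξ : ξ ∈ ⋂ k : ℕ, Set.range ⇑(S ^ (k + 1))) (hξ_norm : ‖ξ‖ = 1) :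
    (∀ᵐ x ∂μ, Tendsto (fun k : ℕ => ∏ n ∈ Finset.range (k + 1), ‖m (T^[n] x)‖ ^ 2)
        atTop (𝓝 (‖ξ x‖ ^ 2)))
    ∧ (∀ᵐ x ∂μ, ‖ξ x‖ = 1)
    ∧ (∀ᵐ x ∂μ, ‖m x‖ = 1) := by
  have hSξ : S ξ ∈ ⋂ k : ℕ, Set.range ⇑(S ^ (k + 1)) := by
    refine Set.mem_iInter.mpr fun k => ?_
    obtain ⟨η, rfl⟩ := Set.mem_iInter.mp hξ k
    exact ⟨S η, by rw [← mul_apply_eq_comp, ← pow_succ, pow_succ']; rfl⟩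
  have hξ_one : ∀ᵐ x ∂μ, ‖ξ x‖ = 1 := ae_norm_eq_one_of_mem_unitaryPart hS hm hTm hT hξ hξ_norm
  have hSξ_one : ∀ᵐ x ∂μ, ‖S ξ x‖ = 1 :=
    ae_norm_eq_one_of_mem_unitaryPart hS hm hTm hT hSξ
      ((norm_apply_eq_norm hS hm hTm ξ).trans hξ_norm)
  have hm_one : ∀ᵐ x ∂μ, ‖m x‖ = 1 := by
    filter_upwards [hS ξ, hSξ_one, hT.quasiMeasurePreserving.ae hξ_one] with x hSx hSx_one hTx
    rwa [hSx, norm_mul, hTx, mul_one] at hSx_one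
  have hm_orbit : ∀ᵐ x ∂μ, ∀ n : ℕ, ‖m (T^[n] x)‖ = 1 :=
    ae_all_iff.mpr fun n => (hT.toMeasurePreserving.iterate n).quasiMeasurePreserving.ae hm_one
  refine ⟨?_, hξ_one, hm_one⟩
  filter_upwards [hξ_one, hm_orbit] with x hξx hmx
  simp only [hξx, hmx, one_pow, Finset.prod_const_one, tendsto_const_nhds]

section CondExp

variable {X E : Type*} {m mX : MeasurableSpace X} {μ : Measure X} [IsProbabilityMeasure μ]
  [NormedAddCommGroup E] [NormedSpace ℝ E] [CompleteSpace E]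

lemma eLpNorm_condExp_sub_integral_le (f : X → E) :
    eLpNorm (μ[f | m] - fun _ => ∫ x, f x ∂μ) 1 μ ≤ 2 * eLpNorm f 1 μ := by
  have hmean : eLpNorm (fun _ => ∫ x, f x ∂μ) 1 μ ≤ eLpNorm f 1 μ := by
    rw [eLpNorm_const _ one_ne_zero (NeZero.ne μ), measure_univ, ENNReal.one_rpow, mul_one,
      eLpNorm_one_eq_lintegral_enorm]
    exact enorm_integral_le_lintegral_enorm f
  calc eLpNorm (μ[f | m] - fun _ => ∫ x, f x ∂μ) 1 μ
    _ ≤ eLpNorm (μ[f | m]) 1 μ + eLpNorm (fun _ => ∫ x, f x ∂μ) 1 μ :=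
      eLpNorm_sub_le integrable_condExp.aestronglyMeasurable aestronglyMeasurable_const le_rfl
    _ ≤ 2 * eLpNorm f 1 μ := by
      rw [two_mul]
      exact add_le_add (eLpNorm_condExp_le_eLpNorm f le_rfl) hmean

lemma tendsto_eLpNorm_condExp_of_approx {ι : Type*} {l : Filter ι} {𝒢 : ι → MeasurableSpace X}
    {f : X → E} (hf : Integrable f μ)
    (happrox : ∀ ε > 0, ∃ q : X → E, Integrable q μ ∧ eLpNorm (f - q) 1 μ < ε ∧
      ∀ᶠ i in l, μ[q | 𝒢 i] =ᵐ[μ] fun _ => ∫ x, q x ∂μ) :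
    Tendsto (fun i => eLpNorm (μ[f | 𝒢 i] - fun _ => ∫ x, f x ∂μ) 1 μ) l (𝓝 0) := by
  refine ENNReal.tendsto_nhds_zero.mpr fun ε hε => ?_
  obtain ⟨q, hq, hfq, hq_ev⟩ := happrox (ε / 2) (ENNReal.half_pos hε.ne')
  filter_upwards [hq_ev] with i hi
  have hsub : μ[f | 𝒢 i] - (fun _ => ∫ x, f x ∂μ) =ᵐ[μ]
      μ[f - q | 𝒢 i] - fun _ => ∫ x, (f - q) x ∂μ := by
    filter_upwards [condExp_sub hf hq (𝒢 i), hi] with x hx hix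
    simp only [Pi.sub_apply, integral_sub hf hq] at hx ⊢
    rw [hx, hix, sub_sub_sub_cancel_right]
  calc eLpNorm (μ[f | 𝒢 i] - fun _ => ∫ x, f x ∂μ) 1 μ
    _ = eLpNorm (μ[f - q | 𝒢 i] - fun _ => ∫ x, (f - q) x ∂μ) 1 μ := eLpNorm_congr_ae hsub
    _ ≤ 2 * eLpNorm (f - q) 1 μ := eLpNorm_condExp_sub_integral_le (f - q)
    _ ≤ 2 * (ε / 2) := by gcongr
    _ = ε := ENNReal.mul_div_cancel two_ne_zero ENNReal.ofNat_ne_top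

end CondExp

section Circle

open AddCircle

variable {T : ℝ}

lemma nsmul_coe_mul_div {N : ℕ} (hN : N ≠ 0) (k : ℕ) :
    N • ((k * (T / N) : ℝ) : AddCircle T) = 0 := by
  have hN' : (N : ℝ) ≠ 0 := by exact_mod_cast hN
  rw [← AddCircle.coe_nsmul, nsmul_eq_mul, show (N : ℝ) * (k * (T / N)) = k • T by
    rw [nsmul_eq_mul]; field_simp, AddCircle.coe_nsmul, AddCircle.coe_period, smul_zero]

variable (T) in
/-- The σ-algebra on the circle pulled back along `z ↦ M • z`; it consists of the Borel sets that
are invariant under translation by `T / M`. -/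
abbrev nsmulComap (M : ℕ) : MeasurableSpace (AddCircle T) :=
  MeasurableSpace.comap (fun z => M • z) inferInstance

lemma nsmulComap_le (M : ℕ) : nsmulComap T M ≤ (inferInstance : MeasurableSpace (AddCircle T)) :=
  (measurable_const_smul M).comap_le

variable [Fact (0 < T)]

lemma measurePreserving_nsmul_haarAddCircle {N : ℕ} (hN : N ≠ 0) :
    MeasurePreserving (fun z : AddCircle T => N • z) haarAddCircle haarAddCircle := by
  simpa only [natCast_zsmul] using
    Measure.measurePreserving_zsmul haarAddCircle (n := (N : ℤ)) (by exact_mod_cast hN)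

lemma measurePreserving_nsmul_withDensity {N : ℕ} (hN : N ≠ 0) {w : AddCircle T → ℝ≥0}
    (hw : Measurable w)
    (hsum : ∀ᵐ z ∂haarAddCircle, ∑ k : Fin N, w (z + ((k : ℕ) * (T / N) : ℝ)) = N) :
    MeasurePreserving (fun z : AddCircle T => N • z) (haarAddCircle.withDensity fun z => w z)
      haarAddCircle := by
  have hNsmul := measurePreserving_nsmul_haarAddCircle (T := T) hN
  refine ⟨hNsmul.measurable, Measure.ext_of_lintegral _ fun φ hφ => ?_⟩
  have hφN : Measurable fun z : AddCircle T => φ (N • z) := hφ.comp hNsmul.measurable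
  set F : AddCircle T → ℝ≥0∞ := fun z => w z * φ (N • z) with hF
  have hF_meas : Measurable F := hw.coe_nnreal_ennreal.mul hφN
  have hFφ : N * ∫⁻ z, F z ∂haarAddCircle = N * ∫⁻ z, φ z ∂haarAddCircle := by
    calc N * ∫⁻ z, F z ∂haarAddCircle
      _ = ∑ k : Fin N, ∫⁻ z, F (z + (((k : ℕ) * (T / N) : ℝ) : AddCircle T)) ∂haarAddCircle := by
        simp only [lintegral_add_right_eq_self F, Finset.sum_const, Finset.card_univ,
          Fintype.card_fin, nsmul_eq_mul]
      _ = ∫⁻ z, ∑ k : Fin N, F (z + (((k : ℕ) * (T / N) : ℝ) : AddCircle T)) ∂haarAddCircle :=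
        (lintegral_finsetSum _ fun _ _ => hF_meas.comp (measurable_add_const _)).symm
      _ = ∫⁻ z, N * φ (N • z) ∂haarAddCircle := by
        refine lintegral_congr_ae ?_
        filter_upwards [hsum] with z hz
        simp only [hF, smul_add, nsmul_coe_mul_div hN, add_zero]
        rw [← Finset.sum_mul, ← ENNReal.ofNNReal_finsetSum, hz, ENNReal.coe_natCast]
      _ = N * ∫⁻ z, φ z ∂haarAddCircle := by
        rw [lintegral_const_mul _ hφN, hNsmul.lintegral_comp hφ]
  rw [lintegral_map hφ hNsmul.measurable, lintegral_withDensity_eq_lintegral_mul _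
    hw.coe_nnreal_ennreal hφN]
  exact (ENNReal.mul_right_inj (by exact_mod_cast hN) (ENNReal.natCast_ne_top N)).mp hFφ

lemma measurePreserving_nsmul_withDensity_nnnorm_sq {E : Type*} [NormedAddCommGroup E]
    [MeasurableSpace E] [OpensMeasurableSpace E] {N : ℕ} (hN : N ≠ 0) {m : AddCircle T → E}
    (hm : Measurable m)
    (hmean : ∀ᵐ z ∂haarAddCircle,
      (1 / N : ℝ) * ∑ k : Fin N, ‖m (z + ((k : ℕ) * (T / N) : ℝ))‖ ^ 2 = 1) :
    MeasurePreserving (fun z : AddCircle T => N • z)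
      (haarAddCircle.withDensity fun z => (‖m z‖₊ ^ 2 : ℝ≥0)) haarAddCircle := by
  refine measurePreserving_nsmul_withDensity hN (hm.nnnorm.pow_const 2) ?_
  filter_upwards [hmean] with z hz
  rw [one_div, inv_mul_eq_iff_eq_mul₀ (by exact_mod_cast hN), mul_one] at hz
  rw [← NNReal.coe_inj]
  push_cast
  exact hz

lemma fourier_coe_div_ne_one {n : ℤ} {M : ℕ} (hM : M ≠ 0) (hn : ¬ (M : ℤ) ∣ n) :
    fourier n ((T / M : ℝ) : AddCircle T) ≠ 1 := by
  have hT : (T : ℂ) ≠ 0 := by exact_mod_cast (Fact.out : 0 < T).ne'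
  have hM' : (M : ℂ) ≠ 0 := by exact_mod_cast hM
  rw [fourier_coe_apply, Ne, Complex.exp_eq_one_iff]
  rintro ⟨j, hj⟩
  refine hn ⟨j, ?_⟩
  have hpi : (Real.pi : ℂ) ≠ 0 := by exact_mod_cast Real.pi_ne_zero
  push_cast at hj
  field_simp [Complex.I_ne_zero] at hj
  exact_mod_cast hj

-- Translation by `T / M` fixes `s (M • z)` and multiplies `fourier n` by a constant `≠ 1`.
lemma integral_fourier_mul_comp_nsmul {n : ℤ} {M : ℕ} (hM : M ≠ 0) (hn : ¬ (M : ℤ) ∣ n)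
    (s : AddCircle T → ℂ) : ∫ z, fourier n z * s (M • z) ∂haarAddCircle = 0 := by
  set a : AddCircle T := ((T / M : ℝ) : AddCircle T)
  have hMa : M • a = 0 := by simpa using nsmul_coe_mul_div (T := T) hM 1
  have hfourier (z : AddCircle T) : fourier n (z + a) = fourier n a * fourier n z := by
    simp only [fourier_apply, smul_add, AddCircle.toCircle_add, Circle.coe_mul, mul_comm]
  have htranslate : fourier n a * ∫ z, fourier n z * s (M • z) ∂haarAddCircle =
      ∫ z, fourier n z * s (M • z) ∂haarAddCircle := by
    conv_rhs => rw [← integral_add_right_eq_self _ a]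
    simp only [smul_add, hMa, add_zero, hfourier, mul_assoc, integral_const_mul]
  exact (mul_left_eq_self₀.mp htranslate).resolve_left (fourier_coe_div_ne_one hM hn)

lemma integrable_coe_haarAddCircle (q : C(AddCircle T, ℂ)) : Integrable q haarAddCircle :=
  q.continuous.integrable_of_hasCompactSupport (HasCompactSupport.of_compactSpace _)

lemma condExp_fourier_nsmulComap {n : ℤ} {M : ℕ} (hM : M ≠ 0) (hn : ¬ (M : ℤ) ∣ n) :
    haarAddCircle[fourier n | nsmulComap T M]
      =ᵐ[haarAddCircle] 0 := by
  refine (ae_eq_condExp_of_forall_setIntegral_eq (nsmulComap_le M)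
    (integrable_coe_haarAddCircle _) (fun _ _ _ => integrableOn_zero) ?_
    aestronglyMeasurable_zero).symm
  rintro _ ⟨s, hs, rfl⟩ -
  calc ∫ z in (M • ·) ⁻¹' s, (0 : AddCircle T → ℂ) z ∂haarAddCircle
    _ = ∫ z, fourier n z * s.indicator 1 (M • z) ∂haarAddCircle := by
      simp only [Pi.zero_apply, integral_zero, integral_fourier_mul_comp_nsmul hM hn]
    _ = ∫ z in (M • ·) ⁻¹' s, fourier n z ∂haarAddCircle := by
      rw [← integral_indicator (measurable_const_smul M hs)]
      congr 1 with z
      by_cases hz : M • z ∈ s <;> simp [hz]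

lemma eventually_condExp_nsmulComap_pow_ae_eq {N : ℕ} (hN : 2 ≤ N) {q : C(AddCircle T, ℂ)}
    (hq : q ∈ Submodule.span ℂ (Set.range (@fourier T))) :
    ∀ᶠ k : ℕ in atTop,
      haarAddCircle[q | nsmulComap T (N ^ k)]
        =ᵐ[haarAddCircle] fun _ => ∫ z, q z ∂haarAddCircle := by
  induction hq using Submodule.span_induction with
  | mem q hq =>
    obtain ⟨n, rfl⟩ := hq
    rcases eq_or_ne n 0 with rfl | hn
    · have hone : ⇑(fourier 0 : C(AddCircle T, ℂ)) = fun _ => 1 := funext fun _ => fourier_zero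
      refine .of_forall fun k => .of_eq ?_
      rw [hone, condExp_const (nsmulComap_le (N ^ k)) (1 : ℂ)]
      simp only [integral_const, probReal_univ, one_smul]
    filter_upwards [eventually_ge_atTop n.natAbs] with k hk
    have hlt : n.natAbs < N ^ k := hk.trans_lt (Nat.lt_pow_self hN)
    have hndvd : ¬ ((N ^ k : ℕ) : ℤ) ∣ n := fun hdvd =>
      hn (Int.eq_zero_of_abs_lt_dvd hdvd (by rw [Int.abs_eq_natAbs]; exact_mod_cast hlt))
    have hpow : N ^ k ≠ 0 := by positivity
    have hint : ∫ z : AddCircle T, fourier n z ∂haarAddCircle = 0 := by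
      simpa using integral_fourier_mul_comp_nsmul (T := T) hpow hndvd fun _ => 1
    rw [hint]
    exact condExp_fourier_nsmulComap hpow hndvd
  | zero =>
    refine .of_forall fun k => .of_eq ?_
    simp only [ContinuousMap.coe_zero, condExp_zero, Pi.zero_apply, integral_zero]
    rfl
  | add p q _ _ hp hq =>
    filter_upwards [hp, hq] with k hp hq
    have hp_int := integrable_coe_haarAddCircle p
    have hq_int := integrable_coe_haarAddCircle q
    simp only [ContinuousMap.coe_add, Pi.add_apply, integral_add hp_int hq_int]
    exact (condExp_add hp_int hq_int _).trans (hp.add hq)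
  | smul c q _ hq =>
    filter_upwards [hq] with k hq
    simp only [ContinuousMap.coe_smul, Pi.smul_apply, integral_smul]
    exact (condExp_smul c q _).trans (hq.const_smul c)

lemma exists_mem_span_fourier_eLpNorm_sub_lt {f : AddCircle T → ℂ}
    (hf : Integrable f haarAddCircle) {ε : ℝ≥0∞} (hε : 0 < ε) :
    ∃ q ∈ Submodule.span ℂ (Set.range (@fourier T)), eLpNorm (f - ⇑q) 1 haarAddCircle < ε := by
  have hdense : hf.toL1 f ∈
      (Submodule.span ℂ (Set.range (@fourierLp T _ 1 _))).topologicalClosure := by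
    rw [span_fourierLp_closure_eq_top ENNReal.one_ne_top]
    trivial
  have hspan : Submodule.span ℂ (Set.range (@fourierLp T _ 1 _)) =
      (Submodule.span ℂ (Set.range (@fourier T))).map
        (ContinuousMap.toLp 1 haarAddCircle ℂ).toLinearMap := by
    rw [Submodule.map_span, ← Set.range_comp]
    rfl
  rw [hspan] at hdense
  obtain ⟨_, ⟨q, hq, rfl⟩, hdist⟩ := EMetric.mem_closure_iff.mp hdense ε hε
  refine ⟨q, hq, ?_⟩
  rw [Lp.edist_def] at hdist
  refine (eLpNorm_congr_ae ?_).trans_lt hdist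
  exact hf.coeFn_toL1.symm.sub (ContinuousMap.coeFn_toLp haarAddCircle q).symm

lemma tendsto_eLpNorm_condExp_nsmulComap_pow {N : ℕ} (hN : 2 ≤ N) {f : AddCircle T → ℂ}
    (hf : Integrable f haarAddCircle) :
    Tendsto (fun k : ℕ => eLpNorm
      (haarAddCircle[f | nsmulComap T (N ^ k)] - fun _ => ∫ z, f z ∂haarAddCircle)
      1 haarAddCircle) atTop (𝓝 0) := by
  refine tendsto_eLpNorm_condExp_of_approx hf fun ε hε => ?_
  obtain ⟨q, hq, hfq⟩ := exists_mem_span_fourier_eLpNorm_sub_lt hf hε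
  exact ⟨q, integrable_coe_haarAddCircle q, hfq, eventually_condExp_nsmulComap_pow_ae_eq hN hq⟩

theorem isExactEndomorphism_nsmul_haarAddCircle {N : ℕ} (hN : 2 ≤ N) :
    IsExactEndomorphism (fun z : AddCircle T => N • z) haarAddCircle where
  toMeasurePreserving := measurePreserving_nsmul_haarAddCircle (by positivity)
  tendsto_condExp f hf := by
    refine (tendsto_eLpNorm_condExp_nsmulComap_pow hN hf.ofReal).congr fun k => ?_
    rw [smul_iterate]
    refine eLpNorm_congr_norm_ae ?_
    filter_upwards [(RCLike.ofRealCLM (K := ℂ)).comp_condExp_comm hf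
      (m := nsmulComap T (N ^ k))] with z hz
    rw [Pi.sub_apply, Pi.sub_apply, integral_ofReal, Real.norm_eq_abs,
      ← RCLike.norm_ofReal (K := ℂ), RCLike.ofReal_sub]
    exact congrArg (‖· - _‖) hz.symm

end Circle

/-- **Lemma 3.2.** If the unitary part of the Wold decomposition of
`(S_m ξ)(z) = m(z) ξ(z^N)` is nonzero and `ξ` is a unit vector in it, then
`|ξ(z)|² = lim_k ∏_{n=0}^{k} |m(z^{Nⁿ})|²` a.e., and `|ξ(z)| = 1 = |m(z)|` a.e. -/
theorem unit_vector_in_unitary_part_of_weighted_composition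
    (N : ℕ) (hN : 2 ≤ N)
    (m : Circle2π → ℂ) (hm_meas : Measurable m)
    -- the isometry condition: `(1/N) ∑_{w^N = z} |m(w)|² = 1` a.e.
    (hiso : ∀ᵐ z ∂haarT,
      (1 / N : ℝ) * ∑ k : Fin N, ‖m (z + (((k : ℕ) : ℝ) * (2 * Real.pi / N) : ℝ))‖ ^ 2 = 1)
    -- the operator `S_m` on `L²(𝕋)`
    (S : Lp ℂ 2 haarT →L[ℂ] Lp ℂ 2 haarT)
    (hS : ∀ ζ : Lp ℂ 2 haarT, ⇑(S ζ) =ᵐ[haarT] fun z => m z * ζ (N • z))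
    -- a unit vector in the unitary subspace `⋂_{k ≥ 1} S^k L²(𝕋)`
    (ξ : Lp ℂ 2 haarT)
    (hξ_mem : ξ ∈ ⋂ k : ℕ, Set.range ⇑(S ^ (k + 1)))
    (hξ_norm : ‖ξ‖ = 1) :
    (∀ᵐ z ∂haarT,
      Tendsto (fun k : ℕ => ∏ n ∈ Finset.range (k + 1), ‖m ((N ^ n : ℕ) • z)‖ ^ 2)
        atTop (nhds (‖ξ z‖ ^ 2)))
    ∧ (∀ᵐ z ∂haarT, ‖ξ z‖ = 1)
    ∧ (∀ᵐ z ∂haarT, ‖m z‖ = 1) := by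
  have hTm := measurePreserving_nsmul_withDensity_nnnorm_sq (by positivity) hm_meas hiso
  simpa only [smul_iterate] using unit_vector_in_unitary_part_of_weighted_composition_general
    (isExactEndomorphism_nsmul_haarAddCircle hN) hm_meas hTm hS hξ_mem hξ_norm
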